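/- Dual Beck–Chevalley: let π : E ⥤ B be a bicartesian fibration (both cartesian and cocartesian). Then π satisfies the Beck–Chevalley condition (over every pullback square in B: cocartesian bottom + cartesian verticals imply cocartesian top) if and only if it satisfies the dual condition: over every pullback square in B, if the top and bottom arrows are cocartesian and the left vertical arrow is cartesian, then the right vertical arrow is cartesian. -/

import Mathlib

/-!
The two conditions are linked by comparison arrows over isomorphisms.

Given a square whose right side `r` has to be shown cartesian, factor `r = k ≫ r'` through a
cartesian lift `r'` of `π.map r`. The square with sides `t ≫ k` and `r'` still lies over a
pullback, so Beck–Chevalley makes `t ≫ k` cocartesian. Two cocartesian arrows `t` and `t ≫ k` that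
differ by an arrow over an isomorphism force `k` to be an isomorphism, and hence `r = k ≫ r'` is
cartesian. The converse is the mirror image: factor the top `t = t' ≫ k` through a cocartesian lift
`t'`, apply the dual condition to the square with sides `t'` and `k ≫ r`, and conclude that `k` is
an isomorphism because `r` and `k ≫ r` are both cartesian.
-/

open CategoryTheory CategoryTheory.Limits

/-- An arrow of the total category is cocartesian for the functor `F`. -/
def IsCocartArrow {E B : Type*} [Category E] [Category B] (F : E ⥤ B)
    {e e' : E} (f : e ⟶ e') : Prop :=
  ∀ (e'' : E) (v : F.obj e' ⟶ F.obj e'') (h : e ⟶ e''),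
    F.map h = F.map f ≫ v → ∃! g : e' ⟶ e'', F.map g = v ∧ f ≫ g = h

/-- An arrow of the total category is cartesian for the functor `F`. -/
def IsCartArrow {E B : Type*} [Category E] [Category B] (F : E ⥤ B)
    {e e' : E} (f : e ⟶ e') : Prop :=
  ∀ (e'' : E) (v : F.obj e'' ⟶ F.obj e) (h : e'' ⟶ e'),
    F.map h = v ≫ F.map f → ∃! g : e'' ⟶ e, F.map g = v ∧ g ≫ f = h

/-- `π` is a Grothendieck opfibration: cocartesian lifts exist. -/
def HasCocartLifts {E B : Type*} [Category E] [Category B] (π : E ⥤ B) : Prop :=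
  ∀ (e : E) ⦃b' : B⦄ (u : π.obj e ⟶ b'),
    ∃ (e' : E) (h : π.obj e' = b') (f : e ⟶ e'),
      π.map f = u ≫ eqToHom h.symm ∧ IsCocartArrow π f

/-- `π` is a Grothendieck fibration: cartesian lifts exist. -/
def HasCartLifts {E B : Type*} [Category E] [Category B] (π : E ⥤ B) : Prop :=
  ∀ (e : E) ⦃b : B⦄ (u : b ⟶ π.obj e),
    ∃ (e' : E) (h : π.obj e' = b) (f : e' ⟶ e),
      π.map f = eqToHom h ≫ u ∧ IsCartArrow π f

section

variable {E B : Type*} [Category E] [Category B] {π : E ⥤ B}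

/-- The uniqueness half of the universal property of a cocartesian arrow. -/
theorem IsCocartArrow.hom_ext {e e' e'' : E} {f : e ⟶ e'} (hf : IsCocartArrow π f)
    {g₁ g₂ : e' ⟶ e''} (hπ : π.map g₁ = π.map g₂) (h : f ≫ g₁ = f ≫ g₂) : g₁ = g₂ :=
  (hf e'' (π.map g₂) (f ≫ g₂) (by simp)).unique ⟨hπ, h⟩ ⟨rfl, rfl⟩

/-- The uniqueness half of the universal property of a cartesian arrow. -/
theorem IsCartArrow.hom_ext {e e' e'' : E} {f : e ⟶ e'} (hf : IsCartArrow π f)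
    {g₁ g₂ : e'' ⟶ e} (hπ : π.map g₁ = π.map g₂) (h : g₁ ≫ f = g₂ ≫ f) : g₁ = g₂ :=
  (hf e'' (π.map g₂) (g₂ ≫ f) (by simp)).unique ⟨hπ, h⟩ ⟨rfl, rfl⟩

theorem IsCocartArrow.isIso_of_comp {e e' e'' : E} {t : e ⟶ e'} {k : e' ⟶ e''}
    (ht : IsCocartArrow π t) (htk : IsCocartArrow π (t ≫ k)) [IsIso (π.map k)] : IsIso k := by
  obtain ⟨g, ⟨hg, hg'⟩, -⟩ := htk e' (inv (π.map k)) t (by simp)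
  refine ⟨g, ht.hom_ext (by simp [hg]) (by simpa using hg'), htk.hom_ext (by simp [hg]) ?_⟩
  rw [← Category.assoc, hg', Category.comp_id]

theorem IsCartArrow.isIso_of_comp {e e' e'' : E} {k : e ⟶ e'} {r : e' ⟶ e''}
    (hr : IsCartArrow π r) (hkr : IsCartArrow π (k ≫ r)) [IsIso (π.map k)] : IsIso k := by
  obtain ⟨g, ⟨hg, hg'⟩, -⟩ := hkr e' (inv (π.map k)) r (by simp)
  refine ⟨g, hkr.hom_ext (by simp [hg]) ?_, hr.hom_ext (by simp [hg]) (by simpa using hg')⟩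
  rw [Category.assoc, hg', Category.id_comp]

theorem IsCocartArrow.comp_isIso {e e' e'' : E} {t : e ⟶ e'} (ht : IsCocartArrow π t)
    (k : e' ⟶ e'') [IsIso k] : IsCocartArrow π (t ≫ k) := by
  intro c v h hh
  obtain ⟨g, ⟨hg, hg'⟩, -⟩ := ht c (π.map k ≫ v) h (by simpa using hh)
  refine ⟨inv k ≫ g, ⟨by simp [hg], by simp [hg']⟩, ?_⟩
  rintro g' ⟨h1, h2⟩
  rw [IsIso.eq_inv_comp]
  exact ht.hom_ext (by simp [hg, h1]) (by rw [hg', ← h2, Category.assoc])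

theorem IsCartArrow.isIso_comp {e e' e'' : E} {r : e' ⟶ e''} (hr : IsCartArrow π r)
    (k : e ⟶ e') [IsIso k] : IsCartArrow π (k ≫ r) := by
  intro c v h hh
  obtain ⟨g, ⟨hg, hg'⟩, -⟩ := hr c (v ≫ π.map k) h (by simpa using hh)
  refine ⟨g ≫ inv k, ⟨by simp [hg], by simp [hg']⟩, ?_⟩
  rintro g' ⟨h1, h2⟩
  rw [IsIso.eq_comp_inv]
  exact hr.hom_ext (by simp [hg, h1]) (by rw [hg', ← h2, Category.assoc])

/-- Every arrow factors as an arrow over an isomorphism followed by a cartesian arrow. -/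
theorem HasCartLifts.exists_factor (hπ : HasCartLifts π) {X Z : E} (r : X ⟶ Z) :
    ∃ (X' : E) (k : X ⟶ X') (r' : X' ⟶ Z),
      k ≫ r' = r ∧ IsIso (π.map k) ∧ IsCartArrow π r' := by
  obtain ⟨X', h, r', hr', hc⟩ := hπ Z (π.map r)
  obtain ⟨k, ⟨hk, hk'⟩, -⟩ := hc X (eqToHom h.symm) r (by simp [hr'])
  exact ⟨X', k, r', hk', by rw [hk]; infer_instance, hc⟩

/-- Every arrow factors as a cocartesian arrow followed by an arrow over an isomorphism. -/
theorem HasCocartLifts.exists_factor (hπ : HasCocartLifts π) {W X : E} (t : W ⟶ X) :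
    ∃ (X' : E) (t' : W ⟶ X') (k : X' ⟶ X),
      t' ≫ k = t ∧ IsIso (π.map k) ∧ IsCocartArrow π t' := by
  obtain ⟨X', h, t', ht', hc⟩ := hπ W (π.map t)
  obtain ⟨k, ⟨hk, hk'⟩, -⟩ := hc X (eqToHom h) t (by simp [ht'])
  exact ⟨X', t', k, hk', by rw [hk]; infer_instance, hc⟩

/-- An isomorphism at the top right corner of a square can be moved between the top and the right
side without affecting whether the square is a pullback. -/
theorem isPullback_comp_iso_iff {W X X' Y Z : B} {t : W ⟶ X} {k : X ⟶ X'} [IsIso k]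
    {l : W ⟶ Y} {r : X' ⟶ Z} {b : Y ⟶ Z} :
    IsPullback (t ≫ k) l r b ↔ IsPullback t l (k ≫ r) b := by
  constructor <;> intro h
  · exact h.of_iso (Iso.refl _) (asIso k).symm (Iso.refl _) (Iso.refl _)
      (by simp) (by simp) (by simp) (by simp)
  · exact h.of_iso (Iso.refl _) (asIso k) (Iso.refl _) (Iso.refl _)
      (by simp) (by simp) (by simp) (by simp)

end

/-- For a bicartesian fibration `π : E ⥤ B`, the Beck–Chevalley condition is
equivalent to its dual. -/
theorem stmt11 {E B : Type*} [Category E] [Category B] [HasPullbacks B]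
    (π : E ⥤ B) (h₁ : HasCocartLifts π) (h₂ : HasCartLifts π) :
    (∀ {W X Y Z : E} (t : W ⟶ X) (l : W ⟶ Y) (r : X ⟶ Z) (bo : Y ⟶ Z),
      t ≫ r = l ≫ bo →
      IsPullback (π.map t) (π.map l) (π.map r) (π.map bo) →
      IsCocartArrow π bo → IsCartArrow π l → IsCartArrow π r →
      IsCocartArrow π t) ↔
    (∀ {W X Y Z : E} (t : W ⟶ X) (l : W ⟶ Y) (r : X ⟶ Z) (bo : Y ⟶ Z),
      t ≫ r = l ≫ bo →
      IsPullback (π.map t) (π.map l) (π.map r) (π.map bo) →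
      IsCocartArrow π t → IsCocartArrow π bo → IsCartArrow π l →
      IsCartArrow π r) := by
  constructor
  · intro bc W X Y Z t l r bo sq pb ht hbo hl
    obtain ⟨X', k, r', rfl, _, hr'⟩ := h₂.exists_factor r
    have htk : IsCocartArrow π (t ≫ k) :=
      bc (t ≫ k) l r' bo (by simpa using sq)
        (by
          rw [π.map_comp] at pb ⊢
          exact isPullback_comp_iso_iff.2 pb) hbo hl hr'
    have := ht.isIso_of_comp htk
    exact hr'.isIso_comp k
  · intro dbc W X Y Z t l r bo sq pb hbo hl hr
    obtain ⟨X', t', k, rfl, _, ht'⟩ := h₁.exists_factor t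
    have hkr : IsCartArrow π (k ≫ r) :=
      dbc t' l (k ≫ r) bo (by simpa using sq)
        (by
          rw [π.map_comp] at pb ⊢
          exact isPullback_comp_iso_iff.1 pb) ht' hbo hl
    have := hr.isIso_of_comp hkr
    exact ht'.comp_isIso k
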